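/- For every N ≥ 2 there is a well-defined injective group homomorphism φ_N : B(Ã_{N−1}) → B(A_N) such that φ_N(s_i) = s_{i+1} for 0 ≤ i ≤ N−2 and φ_N(s_{N−1}) = s_N Π s_1 Π^{−1} s_N^{−1}, where Π = s_N s_{N−1} ⋯ s_1 ∈ B(A_N). -/

import Mathlib

/-- The braid relation word `s_i s_j s_i (s_j s_i s_j)⁻¹` in a free group. -/
def braidRelWord {I : Type*} (i j : I) : FreeGroup I :=
  FreeGroup.of i * FreeGroup.of j * FreeGroup.of i *
    (FreeGroup.of j * FreeGroup.of i * FreeGroup.of j)⁻¹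

/-- The commutation relation word `s_i s_j (s_j s_i)⁻¹` in a free group. -/
def commRelWord {I : Type*} (i j : I) : FreeGroup I :=
  FreeGroup.of i * FreeGroup.of j * (FreeGroup.of j * FreeGroup.of i)⁻¹

/-- The defining relations of the affine braid group `B(Ã_{n-1})`: for `n ≥ 3` the braid
relations `s_i s_{i+1} s_i = s_{i+1} s_i s_{i+1}` (`i ∈ ℤ/n`) and the commutation relations
`s_i s_j = s_j s_i` for `i - j ≠ ±1`; for `n = 2` there are no relations, so that
`B(Ã_1)` is the free group on two generators. -/
def affineBraidRels (n : ℕ) : Set (FreeGroup (ZMod n)) :=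
  if n ≤ 2 then ∅
  else {r | (∃ i : ZMod n, r = braidRelWord i (i + 1)) ∨
            (∃ i j : ZMod n, i - j ≠ 1 ∧ i - j ≠ -1 ∧ r = commRelWord i j)}

/-- The affine braid group `B(Ã_{n-1})`. -/
abbrev AffineBraidGroup (n : ℕ) := PresentedGroup (affineBraidRels n)

/-- The generator `s_i` of the affine braid group `B(Ã_{n-1})`, `i ∈ ℤ/n`. -/
def affineBraidGen (n : ℕ) (i : ZMod n) : AffineBraidGroup n := PresentedGroup.of i

/-- The defining relations of the braid group `B(A_n)` on generators `s_1, …, s_n`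
(indexed here by `Fin n`, with index `i` corresponding to `s_{i+1}`): the braid relations
for adjacent indices and the commutation relations `s_i s_j = s_j s_i` for `|i − j| > 1`. -/
def braidRels (n : ℕ) : Set (FreeGroup (Fin n)) :=
  {r | (∃ i j : Fin n, (i : ℕ) + 1 = (j : ℕ) ∧ r = braidRelWord i j) ∨
       (∃ i j : Fin n, ((i : ℕ) + 1 < (j : ℕ) ∨ (j : ℕ) + 1 < (i : ℕ)) ∧ r = commRelWord i j)}

/-- The braid group `B(A_n)` with generators `s_1, …, s_n`. -/
abbrev BraidGroup (n : ℕ) := PresentedGroup (braidRels n)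

/-- The generator `s_{i+1}` of the braid group `B(A_n)`, for `i : Fin n`. -/
def braidGen (n : ℕ) (i : Fin n) : BraidGroup n := PresentedGroup.of i

/-- The element `Π = s_N s_{N-1} ⋯ s_1` of the braid group `B(A_N)`. -/
def braidPi (N : ℕ) : BraidGroup N :=
  (List.ofFn fun j : Fin N => braidGen N j.rev).prod

/-!
`B(A_N)` is the braid group on `N + 1` strands. The braids whose last strand stays at the last
position form the annular braid group `B(Ã_{N-1}) ⋊ ℤ`, where `ℤ` is generated by the rotation
`s_N Π`: conjugation by `s_N Π` sends `s_{i+1}` to `s_i` and permutes `φ_N(s_0), …, φ_N(s_{N-1})`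
cyclically, so that all relations among these elements follow from those involving `φ_N(s_0) = s_1`.

Injectivity does not require a presentation of that subgroup. Let `K` be the extension of
`B(Ã_{N-1})` by its automorphism group. The action of `B(A_N)` induced from the left
multiplication action of `K` can be written down explicitly on `N + 1` copies of `K`, one for each
position of the distinguished strand. On the last copy `φ_N(x)` acts as left multiplication by `x`,
so `x` can be recovered from `φ_N(x)`.
-/

section BraidSeq

variable {G : Type*} [Group G]

lemma commute_of_semiconjBy {g x x' y y' : G} (hx : SemiconjBy g x x') (hy : SemiconjBy g y y')
    (h : Commute x y) : Commute x' y' := by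
  simpa only [hx.eq, hy.eq, mul_inv_cancel_right] using h.conj g

/-- The elements `u 0, …, u (n - 1)` satisfy the relations of the generators of `B(A_n)`. Indexing
by `ℕ` rather than `Fin n` keeps index arithmetic simple; the values `u i` with `n ≤ i` are
irrelevant. -/
structure IsBraidSeq (n : ℕ) (u : ℕ → G) : Prop where
  braid : ∀ i, i + 1 < n → u i * u (i + 1) * u i = u (i + 1) * u i * u (i + 1)
  commute : ∀ i j, i + 1 < j → j < n → Commute (u i) (u j)

/-- The descending product `u (n - 1) * ⋯ * u 0`, the element `Π` of a braid sequence. -/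
def descProd (u : ℕ → G) : ℕ → G
  | 0 => 1
  | n + 1 => u n * descProd u n

/-- The element `s_N Π` for `N = n + 1`, which rotates the annulus around the last strand. -/
def braidRotation (u : ℕ → G) (n : ℕ) : G := u n * descProd u (n + 1)

lemma descProd_succ (u : ℕ → G) (n : ℕ) : descProd u (n + 1) = u n * descProd u n := rfl

lemma descProd_succ_right (u : ℕ → G) (n : ℕ) :
    descProd u (n + 1) = descProd (fun i => u (i + 1)) n * u 0 := by
  induction n with
  | zero => simp only [descProd, mul_one, one_mul]
  | succ n ih => rw [descProd_succ, ih, descProd_succ, mul_assoc]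

lemma prod_ofFn_rev (u : ℕ → G) (n : ℕ) :
    (List.ofFn fun j : Fin n => u j.rev).prod = descProd u n := by
  induction n with
  | zero => simp [descProd]
  | succ n ih => simp [List.ofFn_succ, descProd_succ, ← ih]

lemma semiconjBy_descProd_descProd {u v : ℕ → G} {g : G} {n : ℕ}
    (h : ∀ i < n, SemiconjBy g (u i) (v i)) :
    SemiconjBy g (descProd u n) (descProd v n) := by
  induction n with
  | zero => exact SemiconjBy.one_right g
  | succ n ih => exact (h n (by omega)).mul_right (ih fun i hi => h i (by omega))

lemma descProd_prod_mem {H : Type*} [Group H] {S : Subgroup (G × H)} {u : ℕ → G} {v : ℕ → H}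
    {n : ℕ} (h : ∀ i < n, (u i, v i) ∈ S) : (descProd u n, descProd v n) ∈ S := by
  induction n with
  | zero => exact S.one_mem
  | succ n ih => exact S.mul_mem (h n (by omega)) (ih fun i hi => h i (by omega))

namespace IsBraidSeq

variable {u : ℕ → G} {n i : ℕ}

lemma mono {m : ℕ} (h : IsBraidSeq n u) (hmn : m ≤ n) : IsBraidSeq m u :=
  ⟨fun i hi => h.braid i (by omega), fun i j hij hj => h.commute i j hij (by omega)⟩

lemma semiconjBy_mul (h : IsBraidSeq n u) (hi : i + 1 < n) :
    SemiconjBy (u i * u (i + 1)) (u i) (u (i + 1)) := by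
  rw [SemiconjBy, h.braid i hi, mul_assoc]

lemma semiconjBy_mul_swap (h : IsBraidSeq n u) (hi : i + 1 < n) :
    SemiconjBy (u (i + 1) * u i) (u (i + 1)) (u i) := by
  rw [SemiconjBy, ← h.braid i hi, mul_assoc]

lemma semiconjBy_descProd (h : IsBraidSeq n u) (hi : i + 1 < n) :
    SemiconjBy (descProd u n) (u (i + 1)) (u i) := by
  induction n with
  | zero => omega
  | succ n ih =>
    rcases Nat.lt_or_ge (i + 1) n with hin | hin
    · exact SemiconjBy.mul_left (h.commute i n hin (by omega)).symm (ih (h.mono (by omega)) hin)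
    · obtain rfl : n = i + 1 := by omega
      have hlow : SemiconjBy (descProd u i) (u (i + 1)) (u (i + 1)) :=
        (semiconjBy_descProd_descProd fun j hj =>
          (h.commute j (i + 1) (by omega) (by omega)).symm).symm
      rw [descProd_succ, descProd_succ, ← mul_assoc]
      exact (h.semiconjBy_mul_swap hi).mul_left hlow

lemma descProd_mul_self (h : IsBraidSeq (n + 1) u) :
    descProd u (n + 1) * descProd u (n + 1) =
      u n * (descProd u (n + 1) * descProd (fun i => u (i + 1)) n) := by
  have hshift : SemiconjBy (descProd u (n + 1)) (descProd (fun i => u (i + 1)) n) (descProd u n) :=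
    semiconjBy_descProd_descProd fun i hi => h.semiconjBy_descProd (by omega)
  rw [hshift.eq, ← mul_assoc, ← descProd_succ]

lemma semiconjBy_descProd_mul_descProd_succ (h : IsBraidSeq (n + 1) u) :
    SemiconjBy (descProd u (n + 1) * descProd (fun i => u (i + 1)) n) (u 0) (u n) := by
  rw [SemiconjBy, ← h.descProd_mul_self, mul_assoc, ← descProd_succ_right]

lemma semiconjBy_descProd_sq (h : IsBraidSeq (n + 1) u) :
    SemiconjBy (descProd u (n + 1) * descProd u (n + 1)) (u 0) (u n) := by
  rw [h.descProd_mul_self]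
  exact SemiconjBy.mul_left (Commute.refl (u n)) h.semiconjBy_descProd_mul_descProd_succ

lemma semiconjBy_braidRotation (h : IsBraidSeq (n + 1) u) (hi : i + 1 < n) :
    SemiconjBy (braidRotation u n) (u (i + 1)) (u i) :=
  SemiconjBy.mul_left (h.commute i n hi (by omega)).symm (h.semiconjBy_descProd (by omega))

lemma semiconjBy_braidRotation_sq (h : IsBraidSeq (n + 2) u) :
    SemiconjBy (braidRotation u (n + 1) * braidRotation u (n + 1)) (u 0) (u n) := by
  have hsq : braidRotation u (n + 1) * braidRotation u (n + 1) =
      u (n + 1) * u n * (descProd u (n + 2) * descProd u (n + 2)) := by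
    have hP := (h.semiconjBy_descProd (i := n) (by omega)).eq
    rw [braidRotation, mul_assoc, ← mul_assoc (descProd u (n + 2)), hP]
    simp only [mul_assoc]
  rw [hsq]
  exact (h.semiconjBy_mul_swap (by omega)).mul_left h.semiconjBy_descProd_sq

end IsBraidSeq

end BraidSeq

section AffineBraidFamily

variable {G : Type*} [Group G]

/-- The elements `f i`, `i ∈ ℤ/n`, satisfy the relations of the generators of `B(Ã_{n-1})`. -/
structure IsAffineBraidFamily {n : ℕ} (f : ZMod n → G) : Prop where
  braid : 2 < n → ∀ i, f i * f (i + 1) * f i = f (i + 1) * f i * f (i + 1)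
  commute : 2 < n → ∀ i j, i - j ≠ 1 → i - j ≠ -1 → Commute (f i) (f j)

namespace IsAffineBraidFamily

lemma map {H : Type*} [Group H] {n : ℕ} {f : ZMod n → G} (h : IsAffineBraidFamily f)
    (φ : G →* H) : IsAffineBraidFamily fun i => φ (f i) where
  braid hn i := by simp only [← map_mul, h.braid hn i]
  commute hn i j h₁ h₂ := (h.commute hn i j h₁ h₂).map φ

lemma comp_add_right {n : ℕ} {f : ZMod n → G} (h : IsAffineBraidFamily f) (c : ZMod n) :
    IsAffineBraidFamily fun i => f (i + c) where
  braid hn i := by simpa only [add_right_comm] using h.braid hn (i + c)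
  commute hn i j h₁ h₂ := h.commute hn _ _ (by simpa using h₁) (by simpa using h₂)

lemma isBraidSeq {n : ℕ} {f : ZMod (n + 1) → G} (h : IsAffineBraidFamily f) :
    IsBraidSeq n fun i => f i where
  braid i hi := by simpa only [Nat.cast_add, Nat.cast_one] using h.braid (by omega) i
  commute i j hij hj := by
    have natCast_ne {a b : ℕ} (ha : a < n + 1) (hb : b < n + 1) (hab : a ≠ b) :
        (a : ZMod (n + 1)) ≠ b := fun h => hab <| by
      rw [← ZMod.val_natCast_of_lt ha, h, ZMod.val_natCast_of_lt hb]
    refine h.commute (by omega) _ _ (fun h₁ => ?_) fun h₁ => ?_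
    · refine natCast_ne (a := i) (b := j + 1) (by omega) (by omega) (by omega) ?_
      push_cast
      linear_combination h₁
    · refine natCast_ne (a := i + 1) (b := j) (by omega) (by omega) (by omega) ?_
      push_cast
      linear_combination h₁

lemma of_semiconjBy {n : ℕ} [NeZero n] {f : ZMod n → G} {g : G}
    (hg : ∀ i, SemiconjBy g (f (i + 1)) (f i))
    (hbraid : 2 < n → f 0 * f 1 * f 0 = f 1 * f 0 * f 1)
    (hcommute : ∀ j, j ≠ 1 → j ≠ -1 → Commute (f 0) (f j)) : IsAffineBraidFamily f := by
  have hpow (k : ℕ) (i : ZMod n) : SemiconjBy (g ^ k) (f (i + k)) (f i) := by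
    induction k with
    | zero => simp
    | succ k ih =>
      rw [pow_succ, Nat.cast_succ, ← add_assoc]
      exact ih.mul_left (hg _)
  have hshift (c i : ZMod n) : SemiconjBy (g ^ (-c).val) (f (i - c)) (f i) := by
    simpa [sub_eq_add_neg] using hpow (-c).val i
  refine ⟨fun hn i => ?_, fun _ i j h₁ h₂ => ?_⟩
  · have h₀ : SemiconjBy (g ^ (-i).val) (f 0) (f i) := by simpa using hshift i i
    have h₁ : SemiconjBy (g ^ (-i).val) (f 1) (f (i + 1)) := by simpa using hshift i (i + 1)
    apply mul_right_cancel (b := g ^ (-i).val)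
    rw [← ((h₀.mul_right h₁).mul_right h₀).eq, ← ((h₁.mul_right h₀).mul_right h₁).eq, hbraid hn]
  · have h₀ : SemiconjBy (g ^ (-i).val) (f 0) (f i) := by simpa using hshift i i
    refine commute_of_semiconjBy h₀ (hshift i j) (hcommute _ (fun h => h₂ ?_) fun h => h₁ ?_)
    · rw [← neg_sub, h]
    · rw [← neg_sub, h, neg_neg]

end IsAffineBraidFamily

/-- The braid sequence `u 0, …, u n` closed up to a cyclic family by the conjugate of `u 0` by
`braidRotation u (n + 1)`; for the generators of `B(A_N)`, `N = n + 2`, these are the prescribed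
images of the generators of `B(Ã_{N-1})`. -/
def cyclicClosure (u : ℕ → G) (n : ℕ) (i : ZMod (n + 2)) : G :=
  if i.val = n + 1 then braidRotation u (n + 1) * u 0 * (braidRotation u (n + 1))⁻¹ else u i.val

lemma cyclicClosure_natCast_of_le (u : ℕ → G) {n i : ℕ} (hi : i ≤ n) :
    cyclicClosure u n i = u i := by
  rw [cyclicClosure, ZMod.val_natCast_of_lt (by omega), if_neg (by omega)]

lemma cyclicClosure_natCast_succ (u : ℕ → G) (n : ℕ) :
    cyclicClosure u n (n + 1 : ℕ) =
      braidRotation u (n + 1) * u 0 * (braidRotation u (n + 1))⁻¹ := by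
  rw [cyclicClosure, ZMod.val_natCast_of_lt (by omega), if_pos rfl]

lemma cyclicClosure_zero (u : ℕ → G) (n : ℕ) : cyclicClosure u n 0 = u 0 := by
  simpa using cyclicClosure_natCast_of_le u n.zero_le

namespace IsBraidSeq

variable {u : ℕ → G} {n : ℕ}

lemma semiconjBy_cyclicClosure (h : IsBraidSeq (n + 2) u) (i : ZMod (n + 2)) :
    SemiconjBy (braidRotation u (n + 1)) (cyclicClosure u n (i + 1)) (cyclicClosure u n i) := by
  obtain ⟨i, hi, rfl⟩ : ∃ k < n + 2, (k : ZMod (n + 2)) = i := ⟨i.val, i.val_lt, by simp⟩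
  rw [← Nat.cast_succ]
  rcases (by omega : i < n ∨ i = n ∨ i = n + 1) with hin | rfl | rfl
  · rw [cyclicClosure_natCast_of_le u hin.le, cyclicClosure_natCast_of_le u hin]
    exact h.semiconjBy_braidRotation (by omega)
  · rw [cyclicClosure_natCast_of_le u le_rfl, cyclicClosure_natCast_succ]
    have hsq := h.semiconjBy_braidRotation_sq.eq
    rw [SemiconjBy, ← mul_assoc, ← mul_assoc, hsq]
    group
  · rw [ZMod.natCast_self, cyclicClosure_zero, cyclicClosure_natCast_succ]
    exact SemiconjBy.conj_mk _ _

lemma isAffineBraidFamily_cyclicClosure (h : IsBraidSeq (n + 2) u) :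
    IsAffineBraidFamily (cyclicClosure u n) := by
  refine .of_semiconjBy h.semiconjBy_cyclicClosure (fun hn => ?_) fun j hj₁ hj₂ => ?_
  · have h₁ : cyclicClosure u n 1 = u 1 := by
      simpa using cyclicClosure_natCast_of_le u (show 1 ≤ n by omega)
    rw [cyclicClosure_zero, h₁]
    exact h.braid 0 (by omega)
  · obtain ⟨j, hj, rfl⟩ : ∃ k < n + 2, (k : ZMod (n + 2)) = j := ⟨j.val, j.val_lt, by simp⟩
    have hj_ne : j ≠ n + 1 := by
      rintro rfl
      exact hj₂ (eq_neg_of_add_eq_zero_left (by exact_mod_cast ZMod.natCast_self (n + 2)))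
    rw [cyclicClosure_zero, cyclicClosure_natCast_of_le u (by omega)]
    rcases Nat.eq_zero_or_pos j with rfl | hpos
    · exact Commute.refl _
    · have : j ≠ 1 := by rintro rfl; exact hj₁ Nat.cast_one
      exact h.commute 0 j (by omega) (by omega)

end IsBraidSeq

end AffineBraidFamily

section Presentations

variable {G : Type*} [Group G]

lemma lift_braidRelWord_eq_one_iff {I : Type*} (f : I → G) (i j : I) :
    FreeGroup.lift f (braidRelWord i j) = 1 ↔ f i * f j * f i = f j * f i * f j := by
  simp only [braidRelWord, map_mul, map_inv, FreeGroup.lift_apply_of, mul_inv_eq_one]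

lemma lift_commRelWord_eq_one_iff {I : Type*} (f : I → G) (i j : I) :
    FreeGroup.lift f (commRelWord i j) = 1 ↔ Commute (f i) (f j) := by
  simp only [commRelWord, map_mul, map_inv, FreeGroup.lift_apply_of, mul_inv_eq_one, commute_iff_eq]

/-- The generators `s_1, …, s_n` of `B(A_n)` as a sequence starting at index `0` and continued by
the junk value `1`. -/
def braidGenSeq (n i : ℕ) : BraidGroup n := if h : i < n then braidGen n ⟨i, h⟩ else 1

lemma braidGenSeq_of_lt {n i : ℕ} (h : i < n) : braidGenSeq n i = braidGen n ⟨i, h⟩ := dif_pos h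

lemma braidPi_eq_descProd (n : ℕ) : braidPi n = descProd (braidGenSeq n) n := by
  simp only [← prod_ofFn_rev, braidPi, braidGenSeq_of_lt (Fin.is_lt _)]

lemma isBraidSeq_braidGenSeq (n : ℕ) : IsBraidSeq n (braidGenSeq n) where
  braid i hi := by
    rw [braidGenSeq_of_lt hi, braidGenSeq_of_lt (by omega : i < n)]
    exact PresentedGroup.mk_eq_mk_of_mul_inv_mem (.inl ⟨_, _, rfl, rfl⟩)
  commute i j hij hj := by
    rw [braidGenSeq_of_lt hj, braidGenSeq_of_lt (by omega : i < n)]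
    exact PresentedGroup.mk_eq_mk_of_mul_inv_mem (.inr ⟨_, _, .inl hij, rfl⟩)

lemma isAffineBraidFamily_affineBraidGen (n : ℕ) : IsAffineBraidFamily (affineBraidGen n) where
  braid hn i := PresentedGroup.mk_eq_mk_of_mul_inv_mem <| by
    rw [affineBraidRels, if_neg (by omega)]
    exact .inl ⟨i, rfl⟩
  commute hn i j h₁ h₂ := PresentedGroup.mk_eq_mk_of_mul_inv_mem <| by
    rw [affineBraidRels, if_neg (by omega)]
    exact .inr ⟨i, j, h₁, h₂, rfl⟩

/-- The homomorphism out of `B(A_n)` determined by a braid sequence. -/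
def IsBraidSeq.lift {n : ℕ} {u : ℕ → G} (h : IsBraidSeq n u) : BraidGroup n →* G :=
  PresentedGroup.toGroup (rels := braidRels n) (f := fun i : Fin n => u i) <| by
    rintro _ (⟨i, j, hij, rfl⟩ | ⟨i, j, hij | hij, rfl⟩)
    · rw [lift_braidRelWord_eq_one_iff, ← hij]
      exact h.braid i (by omega)
    · exact (lift_commRelWord_eq_one_iff _ i j).2 (h.commute i j hij j.isLt)
    · exact (lift_commRelWord_eq_one_iff _ i j).2 (h.commute j i hij i.isLt).symm

lemma IsBraidSeq.lift_braidGenSeq {n : ℕ} {u : ℕ → G} (h : IsBraidSeq n u) {i : ℕ} (hi : i < n) :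
    h.lift (braidGenSeq n i) = u i := by
  rw [braidGenSeq_of_lt hi]
  exact PresentedGroup.toGroup.of _

/-- The homomorphism out of `B(Ã_{n-1})` determined by an affine braid family. -/
def IsAffineBraidFamily.lift {n : ℕ} {f : ZMod n → G} (h : IsAffineBraidFamily f) :
    AffineBraidGroup n →* G :=
  PresentedGroup.toGroup (f := f) <| by
    intro r hr
    unfold affineBraidRels at hr
    split_ifs at hr with hn
    · exact hr.elim
    rcases hr with ⟨i, rfl⟩ | ⟨i, j, h₁, h₂, rfl⟩
    · exact (lift_braidRelWord_eq_one_iff f i _).2 (h.braid (by omega) i)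
    · exact (lift_commRelWord_eq_one_iff f i j).2 (h.commute (by omega) i j h₁ h₂)

lemma IsAffineBraidFamily.lift_affineBraidGen {n : ℕ} {f : ZMod n → G}
    (h : IsAffineBraidFamily f) (i : ZMod n) : h.lift (affineBraidGen n i) = f i :=
  PresentedGroup.toGroup.of _

/-- The endomorphism `s_i ↦ s_{i + c}` of the affine braid group. -/
def affineShift (n : ℕ) (c : ZMod n) : AffineBraidGroup n →* AffineBraidGroup n :=
  ((isAffineBraidFamily_affineBraidGen n).comp_add_right c).lift

lemma affineShift_affineBraidGen (n : ℕ) (c i : ZMod n) :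
    affineShift n c (affineBraidGen n i) = affineBraidGen n (i + c) :=
  IsAffineBraidFamily.lift_affineBraidGen _ i

lemma affineShift_comp_affineShift_of_add_eq_zero {n : ℕ} {c d : ZMod n} (h : d + c = 0) :
    (affineShift n c).comp (affineShift n d) = MonoidHom.id _ :=
  PresentedGroup.ext fun i => by
    change affineShift n c (affineShift n d (affineBraidGen n i)) = affineBraidGen n i
    rw [affineShift_affineBraidGen, affineShift_affineBraidGen, add_assoc, h, add_zero]

/-- The automorphism `s_i ↦ s_{i - 1}` of the affine braid group, which conjugation by `s_N Π`
induces on the image of `φ_N`. -/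
def affineRotationAut (n : ℕ) : MulAut (AffineBraidGroup n) :=
  (affineShift n (-1)).toMulEquiv (affineShift n 1)
    (affineShift_comp_affineShift_of_add_eq_zero (neg_add_cancel 1))
    (affineShift_comp_affineShift_of_add_eq_zero (add_neg_cancel 1))

lemma affineRotationAut_affineBraidGen (n : ℕ) (i : ZMod n) :
    affineRotationAut n (affineBraidGen n (i + 1)) = affineBraidGen n i := by
  change affineShift n (-1) (affineBraidGen n (i + 1)) = affineBraidGen n i
  rw [affineShift_affineBraidGen, add_neg_cancel_right]

/-- The homomorphism `φ_N` for `N = n + 2`. -/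
def affineToBraid (n : ℕ) : AffineBraidGroup (n + 2) →* BraidGroup (n + 2) :=
  (isBraidSeq_braidGenSeq (n + 2)).isAffineBraidFamily_cyclicClosure.lift

lemma affineToBraid_affineBraidGen (n : ℕ) (i : ZMod (n + 2)) :
    affineToBraid n (affineBraidGen (n + 2) i) = cyclicClosure (braidGenSeq (n + 2)) n i :=
  IsAffineBraidFamily.lift_affineBraidGen _ i

end Presentations

section LoopFamily

variable {K : Type*} [Group K]

/-- A braid sequence `u 0, …, u (n - 1)` on `n + 1` strands, together with elements `A 0, …, A n`
that satisfy the relations of the following braids on `n + 2` strands: if a distinguished strand is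
put at position `i` among the other ones, then `A i` is the full twist of that strand with its right
neighbour. -/
structure IsLoopFamily (n : ℕ) (u A : ℕ → K) : Prop where
  isBraidSeq : IsBraidSeq n u
  semiconjBy : ∀ i < n, SemiconjBy (u i) (A (i + 1)) (A i)
  commute : ∀ i j, i < n → j ≤ n → (i + 1 < j ∨ j < i) → Commute (u i) (A j)
  commute_mul : ∀ i < n, Commute (u i) (A (i + 1) * A i)

namespace IsBraidSeq

variable {n : ℕ} {u A : ℕ → K}

lemma commute_loop_of_succ_lt (hu : IsBraidSeq n u)
    (hA : ∀ i < n, SemiconjBy (u i) (A (i + 1)) (A i))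
    (hlast : ∀ i, i + 1 < n → Commute (u i) (A n)) {i j : ℕ} (hij : i + 1 < j) (hj : j ≤ n) :
    Commute (u i) (A j) := by
  induction hj using Nat.decreasingInduction with
  | self => exact hlast i hij
  | of_succ j hj ih =>
    have huij : Commute (u i) (u j) := hu.commute i j hij hj
    exact commute_of_semiconjBy huij.symm (hA j hj) (ih (by omega))

lemma commute_loop_of_lt (hu : IsBraidSeq n u)
    (hA : ∀ i < n, SemiconjBy (u i) (A (i + 1)) (A i))
    (hlast : ∀ i, i + 1 < n → Commute (u i) (A n)) {i j : ℕ} (hji : j < i) (hi : i < n) :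
    Commute (u i) (A j) := by
  induction (show j ≤ i - 1 by omega) using Nat.decreasingInduction with
  | self =>
    obtain ⟨i, rfl⟩ : ∃ k, i = k + 1 := ⟨i - 1, by omega⟩
    have hAi : Commute (u i) (A (i + 2)) :=
      hu.commute_loop_of_succ_lt hA hlast (by omega) (by omega)
    exact commute_of_semiconjBy (hu.semiconjBy_mul hi)
      ((hA i (by omega)).mul_left (hA (i + 1) hi)) hAi
  | of_succ j hj ih =>
    have huji : Commute (u j) (u i) := hu.commute j i (by omega) hi
    exact commute_of_semiconjBy huji (hA j (by omega)) (ih (by omega))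

lemma commute_loop_mul_loop (hu : IsBraidSeq n u)
    (hA : ∀ i < n, SemiconjBy (u i) (A (i + 1)) (A i))
    (hlast : ∀ i, i + 1 < n → Commute (u i) (A n))
    (hlast_mul : ∀ i, i + 1 = n → Commute (u i) (A (i + 1) * A i)) {i : ℕ} (hi : i < n) :
    Commute (u i) (A (i + 1) * A i) := by
  suffices ∀ k ≤ n, ∀ i, i + 1 = k → Commute (u i) (A (i + 1) * A i) from this (i + 1) hi i rfl
  intro k hk
  induction hk using Nat.decreasingInduction with
  | self => exact hlast_mul
  | of_succ k hk ih =>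
    rintro i rfl
    have hA₁ : SemiconjBy (u (i + 1) * u i) (A (i + 2)) (A (i + 1)) :=
      (hA (i + 1) hk).mul_left (hu.commute_loop_of_succ_lt hA hlast (by omega) (by omega))
    have hA₀ : SemiconjBy (u (i + 1) * u i) (A (i + 1)) (A i) :=
      SemiconjBy.mul_left (hu.commute_loop_of_lt hA hlast (by omega) hk) (hA i (by omega))
    exact commute_of_semiconjBy (hu.semiconjBy_mul_swap hk) (hA₁.mul_right hA₀) (ih (i + 1) rfl)

lemma isLoopFamily (hu : IsBraidSeq n u) (hA : ∀ i < n, SemiconjBy (u i) (A (i + 1)) (A i))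
    (hlast : ∀ i, i + 1 < n → Commute (u i) (A n))
    (hlast_mul : ∀ i, i + 1 = n → Commute (u i) (A (i + 1) * A i)) : IsLoopFamily n u A where
  isBraidSeq := hu
  semiconjBy := hA
  commute _ _ hi hj h := h.elim (hu.commute_loop_of_succ_lt hA hlast · hj)
    (hu.commute_loop_of_lt hA hlast · hi)
  commute_mul _ hi := hu.commute_loop_mul_loop hA hlast hlast_mul hi

end IsBraidSeq

/-- The family `A 0, …, A n` of a loop family, obtained from `A n = τ` by conjugating downwards:
`A i = (u i ⋯ u (n - 1)) τ (u i ⋯ u (n - 1))⁻¹`. Writing `u i ⋯ u (n - 1)` as the quotient of the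
products `u 0 ⋯ u (j - 1)`, inverted, for `j = i` and `j = n` avoids subtraction of indices. -/
def loopConj (u : ℕ → K) (n : ℕ) (τ : K) (i : ℕ) : K :=
  MulAut.conj (descProd u⁻¹ i / descProd u⁻¹ n) τ

lemma loopConj_self (u : ℕ → K) (n : ℕ) (τ : K) : loopConj u n τ n = τ := by
  simp only [loopConj, div_self', map_one, MulAut.one_apply]

lemma semiconjBy_loopConj (u : ℕ → K) (n : ℕ) (τ : K) (i : ℕ) :
    SemiconjBy (u i) (loopConj u n τ (i + 1)) (loopConj u n τ i) := by
  simp only [SemiconjBy, loopConj, descProd_succ, Pi.inv_apply, MulAut.conj_apply, div_eq_mul_inv,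
    mul_inv_rev, inv_inv, mul_assoc, mul_inv_cancel_left]

lemma IsBraidSeq.isLoopFamily_loopConj {n : ℕ} {u : ℕ → K} {ρ : K} (hu : IsBraidSeq (n + 1) u)
    (hρ : ∀ i < n, SemiconjBy ρ (u (i + 1)) (u i)) (hρ_sq : SemiconjBy (ρ * ρ) (u 0) (u n)) :
    IsLoopFamily (n + 1) u (loopConj u (n + 1) (ρ * (descProd u (n + 1))⁻¹)) := by
  set P := descProd u (n + 1)
  set Q := descProd (fun i => u (i + 1)) n
  have hA := semiconjBy_loopConj u (n + 1) (ρ * P⁻¹)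
  refine hu.isLoopFamily (fun i _ => hA i) (fun i hi => ?_) fun i hi => ?_
  · have hP : SemiconjBy P⁻¹ (u i) (u (i + 1)) := (hu.semiconjBy_descProd hi).inv_symm_left
    rw [loopConj_self]
    exact ((hρ i (by omega)).mul_left hP).symm
  · obtain rfl : i = n := by omega
    have hρQ : SemiconjBy ρ Q (descProd u i) := semiconjBy_descProd_descProd hρ
    have hmul : loopConj u (i + 1) (ρ * P⁻¹) (i + 1) * loopConj u (i + 1) (ρ * P⁻¹) i =
        ρ * ρ * (P * Q)⁻¹ * (u i)⁻¹ := by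
      rw [eq_mul_inv_iff_mul_eq, mul_assoc, ← (hA i).eq, loopConj_self]
      calc ρ * P⁻¹ * (u i * (ρ * P⁻¹)) = ρ * ((descProd u i)⁻¹ * ρ) * P⁻¹ := by
            simp only [P, descProd_succ]; group
        _ = ρ * (ρ * Q⁻¹) * P⁻¹ := by rw [hρQ.inv_right.eq]
        _ = ρ * ρ * (P * Q)⁻¹ := by group
    have hPQ : SemiconjBy (P * Q)⁻¹ (u i) (u 0) :=
      hu.semiconjBy_descProd_mul_descProd_succ.inv_symm_left
    rw [hmul]
    exact ((hρ_sq.mul_left hPQ).mul_left (Commute.refl (u i)).inv_left).symm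

end LoopFamily

section InducedAction

variable {K : Type*} [Group K]

/-- The action on `n + 2` copies of `K` of the `i`-th generator of the braid group on `n + 2`
strands. The copy with index `k` corresponds to the distinguished strand being at position `k`; the
generator permutes these positions, and the remaining strands are numbered from `0` to `n`
irrespective of the distinguished one. Only the values for `i ≤ n` are meaningful. -/
def inducedGen (n : ℕ) (u A : ℕ → K) (i : ℕ) : Equiv.Perm (Fin (n + 2) × K) :=
  Equiv.prodShear (Equiv.swap (Fin.ofNat (n + 2) i) (Fin.ofNat (n + 2) (i + 1))) fun k =>
    Equiv.mulLeft <|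
      if k.val < i then u (i - 1) else if k.val = i then A i else if k.val = i + 1 then 1 else u i

variable {n : ℕ} {u A : ℕ → K} {i k : ℕ}

lemma inducedGen_of_lt (hi : i < n + 1) (hk : k < n + 2) (x : K) (h : k < i) :
    inducedGen n u A i (⟨k, hk⟩, x) = (⟨k, hk⟩, u (i - 1) * x) := by
  simp (disch := omega) [inducedGen, Equiv.swap_apply_def, Fin.ext_iff, Nat.mod_eq_of_lt, h, h.ne,
    (h.trans i.lt_succ_self).ne]

lemma inducedGen_of_eq (hi : i < n + 1) (hk : k < n + 2) (x : K) (h : k = i) :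
    inducedGen n u A i (⟨k, hk⟩, x) = (⟨i + 1, by omega⟩, A i * x) := by
  simp (disch := omega) [inducedGen, Equiv.swap_apply_def, Fin.ext_iff, Nat.mod_eq_of_lt, h]

lemma inducedGen_of_eq_succ (hk : k < n + 2) (x : K) (h : k = i + 1) :
    inducedGen n u A i (⟨k, hk⟩, x) = (⟨i, by omega⟩, x) := by
  simp (disch := omega) [inducedGen, Equiv.swap_apply_def, Fin.ext_iff, Nat.mod_eq_of_lt, h]

lemma inducedGen_of_succ_lt (hk : k < n + 2) (x : K) (h : i + 1 < k) :
    inducedGen n u A i (⟨k, hk⟩, x) = (⟨k, hk⟩, u i * x) := by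
  have h' : i < k := by omega
  simp (disch := omega) [inducedGen, Equiv.swap_apply_def, Fin.ext_iff, Nat.mod_eq_of_lt, h.ne',
    h'.ne', h'.not_gt]

namespace IsLoopFamily

lemma inducedGen_braid (h : IsLoopFamily n u A) (hi : i < n) :
    inducedGen n u A i * inducedGen n u A (i + 1) * inducedGen n u A i =
      inducedGen n u A (i + 1) * inducedGen n u A i * inducedGen n u A (i + 1) := by
  ext1 ⟨⟨k, hk⟩, x⟩
  simp only [Equiv.Perm.mul_apply]
  rcases (by omega : k < i ∨ k = i ∨ k = i + 1 ∨ k = i + 2 ∨ i + 2 < k) with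
    hki | hki | hki | hki | hki <;>
  simp (disch := omega) only [inducedGen_of_succ_lt, inducedGen_of_eq_succ, inducedGen_of_eq,
    inducedGen_of_lt, ← mul_assoc, Nat.add_sub_cancel]
  · obtain ⟨i, rfl⟩ : ∃ j, i = j + 1 := ⟨i - 1, by omega⟩
    rw [Nat.add_sub_cancel, h.isBraidSeq.braid i (by omega)]
  · rw [← (h.commute_mul i hi).eq, mul_assoc (u i)]
  · rw [(h.semiconjBy i hi).eq]
  · rw [h.isBraidSeq.braid i (by omega)]

lemma inducedGen_commute (h : IsLoopFamily n u A) {j : ℕ} (hij : i + 1 < j) (hj : j < n + 1) :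
    Commute (inducedGen n u A i) (inducedGen n u A j) := by
  ext1 ⟨⟨k, hk⟩, x⟩
  simp only [Equiv.Perm.mul_apply]
  rcases (by omega : k < i ∨ k = i ∨ k = i + 1 ∨ (i + 1 < k ∧ k < j) ∨ k = j ∨ k = j + 1 ∨
    j + 1 < k) with hki | hki | hki | hki | hki | hki | hki <;>
  simp (disch := omega) only [inducedGen_of_succ_lt, inducedGen_of_eq_succ, inducedGen_of_eq,
    inducedGen_of_lt, ← mul_assoc]
  · rw [(h.isBraidSeq.commute (i - 1) (j - 1) (by omega) (by omega)).eq]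
  · rw [(h.commute (j - 1) i (by omega) (by omega) (by omega)).eq]
  · rw [(h.isBraidSeq.commute i (j - 1) (by omega) (by omega)).eq]
  · rw [(h.commute i j (by omega) (by omega) (by omega)).eq]
  · rw [(h.isBraidSeq.commute i j hij (by omega)).eq]

lemma isBraidSeq_inducedGen (h : IsLoopFamily n u A) : IsBraidSeq (n + 1) (inducedGen n u A) :=
  ⟨fun _ hi => h.inducedGen_braid (by omega), fun _ _ => h.inducedGen_commute⟩

end IsLoopFamily

end InducedAction

section Injectivity

variable {G K ι : Type*} [Group G] [Group K]

/-- For an action `θ` of `G` on a family of copies of `K`, the pairs `(g, k)` such that `g` acts on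
the copy with index `i` as left multiplication by `k`. -/
def fiberAction (θ : G →* Equiv.Perm (ι × K)) (i : ι) : Subgroup (G × K) where
  carrier := {p | ∀ x, θ p.1 (i, x) = (i, p.2 * x)}
  one_mem' x := by simp
  mul_mem' hp hq x := by
    rw [Prod.fst_mul, map_mul, Equiv.Perm.mul_apply, hq, hp, Prod.snd_mul, mul_assoc]
  inv_mem' hp x := by
    rw [Prod.fst_inv, map_inv, Equiv.Perm.inv_eq_iff_eq, hp, Prod.snd_inv, mul_inv_cancel_left]

lemma injective_of_prod_mem_fiberAction {H : Type*} [Group H] {θ : G →* Equiv.Perm (ι × K)} {i : ι}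
    {φ : H →* G} {ψ : H →* K} (hψ : Function.Injective ψ)
    (h : ∀ x, (φ x, ψ x) ∈ fiberAction θ i) : Function.Injective φ := by
  rw [injective_iff_map_eq_one] at hψ ⊢
  intro x hx
  have hfix : θ (φ x) (i, 1) = (i, ψ x * 1) := h x 1
  rw [hx, map_one, Equiv.Perm.one_apply, mul_one, Prod.mk.injEq] at hfix
  exact hψ x hfix.2.symm

namespace IsLoopFamily

variable {n : ℕ} {u A : ℕ → K}

/-- The action of `B(A_{n+1})` on `n + 2` copies of `K` induced from a loop family in `K`. -/
def inducedHom (h : IsLoopFamily n u A) : BraidGroup (n + 1) →* Equiv.Perm (Fin (n + 2) × K) :=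
  h.isBraidSeq_inducedGen.lift

lemma inducedHom_braidGenSeq (h : IsLoopFamily n u A) {i : ℕ} (hi : i < n + 1) :
    h.inducedHom (braidGenSeq (n + 1) i) = inducedGen n u A i :=
  h.isBraidSeq_inducedGen.lift_braidGenSeq hi

lemma braidGenSeq_mem_fiberAction (h : IsLoopFamily n u A) {i : ℕ} (hi : i < n) :
    (braidGenSeq (n + 1) i, u i) ∈ fiberAction h.inducedHom (Fin.last (n + 1)) := fun x => by
  rw [h.inducedHom_braidGenSeq (by omega)]
  exact inducedGen_of_succ_lt _ x (by omega)

lemma braidGenSeq_mul_self_mem_fiberAction (h : IsLoopFamily n u A) :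
    (braidGenSeq (n + 1) n * braidGenSeq (n + 1) n, A n) ∈
      fiberAction h.inducedHom (Fin.last (n + 1)) := fun x => by
  rw [map_mul, h.inducedHom_braidGenSeq (by omega), Equiv.Perm.mul_apply, Fin.last,
    inducedGen_of_eq_succ _ _ rfl, inducedGen_of_eq (by omega) _ _ rfl]

lemma braidRotation_mem_fiberAction (h : IsLoopFamily n u A) :
    (braidRotation (braidGenSeq (n + 1)) n, A n * descProd u n) ∈
      fiberAction h.inducedHom (Fin.last (n + 1)) := by
  rw [braidRotation, descProd_succ, ← mul_assoc]
  exact mul_mem h.braidGenSeq_mul_self_mem_fiberAction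
    (descProd_prod_mem fun i hi => h.braidGenSeq_mem_fiberAction hi)

end IsLoopFamily

namespace IsAffineBraidFamily

variable {n : ℕ} {f : ZMod (n + 2) → K} {ρ : K}

lemma isLoopFamily_loopConj (hf : IsAffineBraidFamily f)
    (hρ : ∀ i, SemiconjBy ρ (f (i + 1)) (f i)) :
    IsLoopFamily (n + 1) (fun i => f i) (loopConj (fun i => f i) (n + 1)
      (ρ * (descProd (fun i => f i) (n + 1))⁻¹)) := by
  have hρ_natCast (i : ℕ) : SemiconjBy ρ (f (i + 1 : ℕ)) (f i) := by
    simpa only [Nat.cast_succ] using hρ i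
  have hρ_sq := (hρ_natCast n).mul_left (hρ_natCast (n + 1))
  rw [ZMod.natCast_self, ← Nat.cast_zero] at hρ_sq
  exact hf.isBraidSeq.isLoopFamily_loopConj (fun i _ => hρ_natCast i) hρ_sq

lemma cyclicClosure_mem_fiberAction (hf : IsAffineBraidFamily f)
    (hρ : ∀ i, SemiconjBy ρ (f (i + 1)) (f i)) (i : ZMod (n + 2)) :
    (cyclicClosure (braidGenSeq (n + 2)) n i, f i) ∈
      fiberAction (hf.isLoopFamily_loopConj hρ).inducedHom (Fin.last (n + 2)) := by
  have hgen {k : ℕ} (hk : k < n + 1) :=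
    (hf.isLoopFamily_loopConj hρ).braidGenSeq_mem_fiberAction hk
  have hrot := (hf.isLoopFamily_loopConj hρ).braidRotation_mem_fiberAction
  rw [loopConj_self, inv_mul_cancel_right] at hrot
  obtain ⟨i, hi, rfl⟩ : ∃ k < n + 2, (k : ZMod (n + 2)) = i := ⟨i.val, i.val_lt, by simp⟩
  obtain hi | rfl := Nat.lt_succ_iff_lt_or_eq.1 hi
  · rw [cyclicClosure_natCast_of_le _ (by omega)]
    exact hgen hi
  · have hconj : f (n + 1 : ℕ) = ρ * f (0 : ℕ) * ρ⁻¹ := by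
      rw [eq_mul_inv_iff_mul_eq, Nat.cast_zero, ← ZMod.natCast_self (n + 2), Nat.cast_succ (n + 1),
        (hρ _).eq]
    rw [cyclicClosure_natCast_succ, hconj]
    exact mul_mem (mul_mem hrot (hgen n.succ_pos)) (inv_mem hrot)

lemma affineToBraid_mem_fiberAction (hf : IsAffineBraidFamily f)
    (hρ : ∀ i, SemiconjBy ρ (f (i + 1)) (f i)) (x : AffineBraidGroup (n + 2)) :
    (affineToBraid n x, hf.lift x) ∈
      fiberAction (hf.isLoopFamily_loopConj hρ).inducedHom (Fin.last (n + 2)) := by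
  refine PresentedGroup.generated_by _
    ((fiberAction _ _).comap ((affineToBraid n).prod hf.lift)) (fun i => ?_) x
  change (affineToBraid n (affineBraidGen _ i), hf.lift (affineBraidGen _ i)) ∈ fiberAction _ _
  rw [affineToBraid_affineBraidGen, lift_affineBraidGen]
  exact hf.cyclicClosure_mem_fiberAction hρ i

lemma affineToBraid_injective (hf : IsAffineBraidFamily f)
    (hρ : ∀ i, SemiconjBy ρ (f (i + 1)) (f i)) (hinj : Function.Injective hf.lift) :
    Function.Injective (affineToBraid n) :=
  injective_of_prod_mem_fiberAction hinj (hf.affineToBraid_mem_fiberAction hρ)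

end IsAffineBraidFamily

/-- The holomorph `G ⋊ Aut G`, in which every automorphism of `G` becomes inner. -/
abbrev Holomorph (G : Type*) [Group G] := G ⋊[MonoidHom.id (MulAut G)] MulAut G

lemma semiconjBy_inr_affineRotationAut (n : ℕ) (i : ZMod n) :
    SemiconjBy (SemidirectProduct.inr (affineRotationAut n) : Holomorph (AffineBraidGroup n))
      (SemidirectProduct.inl (affineBraidGen n (i + 1)))
      (SemidirectProduct.inl (affineBraidGen n i)) := by
  rw [SemiconjBy, ← mul_inv_eq_iff_eq_mul, ← map_inv, ← affineRotationAut_affineBraidGen n i]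
  exact (SemidirectProduct.inl_aut _ _).symm

lemma affineToBraid_injective (n : ℕ) : Function.Injective (affineToBraid n) := by
  have hf := (isAffineBraidFamily_affineBraidGen (n + 2)).map
    (SemidirectProduct.inl : _ →* Holomorph (AffineBraidGroup (n + 2)))
  have hlift : hf.lift = SemidirectProduct.inl := PresentedGroup.ext hf.lift_affineBraidGen
  refine hf.affineToBraid_injective (semiconjBy_inr_affineRotationAut (n + 2)) ?_
  rw [hlift]
  exact SemidirectProduct.inl_injective

end Injectivity

/-- For every `N ≥ 2` there is a well-defined injective group homomorphism
`φ_N : B(Ã_{N−1}) → B(A_N)` such that `φ_N(s_i) = s_{i+1}` for `0 ≤ i ≤ N−2` and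
`φ_N(s_{N−1}) = s_N Π s_1 Π⁻¹ s_N⁻¹`, where `Π = s_N s_{N−1} ⋯ s_1 ∈ B(A_N)`.
(Here `braidGen N ⟨i, _⟩` is the generator `s_{i+1}` of `B(A_N)`.) -/
theorem exists_injective_affineBraid_to_braid (N : ℕ) (hN : 2 ≤ N) :
    ∃ φ : AffineBraidGroup N →* BraidGroup N,
      Function.Injective φ ∧
      (∀ (i : ℕ) (hi : i ≤ N - 2),
        φ (affineBraidGen N (i : ZMod N)) = braidGen N ⟨i, by omega⟩) ∧
      φ (affineBraidGen N ((N - 1 : ℕ) : ZMod N)) =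
        braidGen N ⟨N - 1, by omega⟩ * braidPi N * braidGen N ⟨0, by omega⟩ *
          (braidPi N)⁻¹ * (braidGen N ⟨N - 1, by omega⟩)⁻¹ := by
  obtain ⟨n, rfl⟩ : ∃ n, N = n + 2 := ⟨N - 2, by omega⟩
  refine ⟨affineToBraid n, affineToBraid_injective n, fun i hi => ?_, ?_⟩
  · have hin : i ≤ n := by omega
    rw [affineToBraid_affineBraidGen, cyclicClosure_natCast_of_le _ hin,
      braidGenSeq_of_lt (by omega)]
  · simp only [Nat.add_one_sub_one]
    rw [affineToBraid_affineBraidGen, cyclicClosure_natCast_succ, braidRotation,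
      ← braidPi_eq_descProd, braidGenSeq_of_lt n.succ.lt_succ_self,
      braidGenSeq_of_lt n.succ.succ_pos, mul_inv_rev, ← mul_assoc]
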